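/- Let ℓ, m be natural numbers with 18 ≤ ℓ ≤ m, and let k satisfy 2 ≤ k ≤ ℓm/2. Define n = 2⌊(ℓ−8)/2⌋ if ℓm is even, and n = 2⌊(ℓ−8)/2⌋ − 1 if ℓm is odd, and set v = min(k, n²/2) as a real number. Then p_k(ℓ,m) − p_{k−1}(ℓ,m) ≥ C · 2^{√v} / v^{9/4}, where C = 3√3/(√2·π²). -/

import Mathlib

/-- `rectPartitions k l m` is the number of integer partitions of `k` fitting in an
`l × m` rectangle: at most `l` parts, each part at most `m`. -/
noncomputable def rectPartitions (k l m : ℕ) : ℕ :=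
  Nat.card {π : Nat.Partition k // Multiset.card π.parts ≤ l ∧ ∀ i ∈ π.parts, i ≤ m}

/-!
The polynomials of degree `d` in `x_0, …, x_L` form the `d`-th symmetric power of the irreducible
`sl₂`-module of dimension `L + 1`. Its weight spaces have dimensions `p_k(d, L)`, so below the
middle `p_k(d, L) - p_{k-1}(d, L)` is the multiplicity `hwMult L d k` of the irreducible module of
highest weight `L d - 2 k`.

The product of two nonzero highest weight vectors is again one. Hence multiplicities do not
decrease when a positive multiplicity is added to the indices; together with the symmetry of
Gaussian binomials and a computation for `8 ≤ L, d < 16`, this makes all of them positive for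
`L, d ≥ 8` and `k ≠ 1`.

For even `L` the module has a real structure, and the invariant pairing of two highest weight
vectors of weight `w` and degree `d` is an anisotropic form whose values are the invariants of
degree `2 d`. This gives `hwMult L d k ≤ (w + 1) * hwMult L (2 d) (L d)`. For `L = 2 t` and
`d = t` all multiplicities together account for the `(3 t).choose t` monomials, so the single number
`hwMult (2 t) (2 t) (2 t ^ 2)` is at least `3 ^ (t + 1) / 2 ^ 18`; multiplying by highest weight
vectors carries this bound to every larger rectangle.
-/

section GradedSl2

variable {K V : Type*} [Field K] [AddCommGroup V] [Module K V]

/-- A bounded `ℤ`-graded representation of `sl₂`: `A j` is the eigenspace of `H = [E, F]` for the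
eigenvalue `j`, and it vanishes when `|j| > N`. Only the homogeneous part `⨁ A j` of `V` carries the
relations, so that polynomials of one fixed degree inside a polynomial ring qualify. -/
structure IsGradedSl2 (A : ℤ → Submodule K V) (E F : Module.End K V) (N : ℤ) : Prop where
  raise {j : ℤ} {v : V} (hv : v ∈ A j) : E v ∈ A (j + 2)
  lower {j : ℤ} {v : V} (hv : v ∈ A j) : F v ∈ A (j - 2)
  commutator {j : ℤ} {v : V} (hv : v ∈ A j) : E (F v) = F (E v) + (j : K) • v
  eq_zero_of_lt {j : ℤ} {v : V} (hv : v ∈ A j) (hj : N < |j|) : v = 0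

namespace IsGradedSl2

variable {A : ℤ → Submodule K V} {E F : Module.End K V} {N j : ℤ} {v : V}

theorem raise_pow (h : IsGradedSl2 A E F N) (hv : v ∈ A j) (r : ℕ) : (E ^ r) v ∈ A (j + 2 * r) := by
  induction r with
  | zero => simpa using hv
  | succ r ih =>
    rw [pow_succ', Module.End.mul_apply]
    convert h.raise ih using 2
    push_cast
    ring

theorem lower_pow (h : IsGradedSl2 A E F N) (hv : v ∈ A j) (r : ℕ) : (F ^ r) v ∈ A (j - 2 * r) := by
  induction r with
  | zero => simpa using hv
  | succ r ih =>
    rw [pow_succ', Module.End.mul_apply]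
    convert h.lower ih using 2
    push_cast
    ring

theorem raise_pow_eq_zero (h : IsGradedSl2 A E F N) (hv : v ∈ A j) {r : ℕ} (hr : N < j + 2 * r) :
    (E ^ r) v = 0 :=
  h.eq_zero_of_lt (h.raise_pow hv r) (hr.trans_le (le_abs_self _))

theorem lower_pow_eq_zero (h : IsGradedSl2 A E F N) (hv : v ∈ A j) {r : ℕ} (hr : N < 2 * r - j) :
    (F ^ r) v = 0 :=
  h.eq_zero_of_lt (h.lower_pow hv r) (hr.trans_le (by rw [← neg_sub]; exact neg_le_abs _))

theorem raise_pow_lower (h : IsGradedSl2 A E F N) (hv : v ∈ A j) (r : ℕ) :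
    (E ^ (r + 1)) (F v) = F ((E ^ (r + 1)) v) + ((r + 1) * (j + r) : K) • (E ^ r) v := by
  induction r with
  | zero => simp [h.commutator hv]
  | succ r ih =>
    calc (E ^ (r + 1 + 1)) (F v)
      _ = E ((E ^ (r + 1)) (F v)) := by rw [pow_succ', Module.End.mul_apply]
      _ = E (F ((E ^ (r + 1)) v)) + ((r + 1) * (j + r) : K) • (E ^ (r + 1)) v := by
        rw [ih, map_add, map_smul, ← Module.End.mul_apply E (E ^ r), ← pow_succ']
      _ = F ((E ^ (r + 1 + 1)) v) + ((j + 2 * (r + 1 : ℕ) : ℤ) : K) • (E ^ (r + 1)) v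
            + ((r + 1) * (j + r) : K) • (E ^ (r + 1)) v := by
        rw [h.commutator (h.raise_pow hv (r + 1)), ← Module.End.mul_apply E (E ^ (r + 1)),
          ← pow_succ']
      _ = F ((E ^ (r + 1 + 1)) v)
            + (((r + 1 : ℕ) + 1) * (j + (r + 1 : ℕ)) : K) • (E ^ (r + 1)) v := by
        rw [add_assoc, ← add_smul]
        congr 2
        push_cast
        ring

theorem raise_lower_pow (h : IsGradedSl2 A E F N) (hv : v ∈ A j) (hEv : E v = 0) (r : ℕ) :
    E ((F ^ (r + 1)) v) = ((r + 1) * (j - r) : K) • (F ^ r) v := by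
  induction r with
  | zero => simp [h.commutator hv, hEv]
  | succ r ih =>
    rw [pow_succ', Module.End.mul_apply, h.commutator (h.lower_pow hv (r + 1)), ih, map_smul,
      ← Module.End.mul_apply F, ← pow_succ', ← add_smul]
    congr 1
    push_cast
    ring

variable [CharZero K]

theorem exists_raise_eq (h : IsGradedSl2 A E F N) (hj : 0 < j) (hv : v ∈ A j) :
    ∃ u ∈ A (j - 2), E u = v := by
  suffices key : ∀ r : ℕ, ∀ v ∈ A j, (E ^ r) v = 0 → ∃ u ∈ A (j - 2), E u = v from
    key (N + 1).toNat v hv (h.raise_pow_eq_zero hv (by omega))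
  intro r
  induction r with
  | zero => exact fun v _ hv0 => ⟨0, zero_mem _, by simpa using hv0.symm⟩
  | succ r ih =>
    intro v hv hv0
    set c : K := (r + 1) * (j + r)
    have hc : c ≠ 0 := by
      have hpos : ((r : ℤ) + 1) * (j + r) ≠ 0 := by positivity
      simp only [c]
      exact_mod_cast hpos
    have hFv := h.lower hv
    -- `E (F v)` agrees with `c • v` up to a vector killed by `E ^ r`
    obtain ⟨u, hu, hEu⟩ := ih (E (F v) - c • v)
      (sub_mem (by simpa using h.raise hFv) (Submodule.smul_mem _ _ hv)) <| by
        rw [map_sub, map_smul, ← Module.End.mul_apply, ← pow_succ, h.raise_pow_lower hv, hv0,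
          map_zero, zero_add, sub_self]
    refine ⟨c⁻¹ • (F v - u), Submodule.smul_mem _ _ (sub_mem hFv hu), ?_⟩
    rw [map_smul, map_sub, hEu, sub_sub_cancel, inv_smul_smul₀ hc]

theorem eq_zero_of_raise_eq_zero (h : IsGradedSl2 A E F N) (hj : j < 0) (hv : v ∈ A j)
    (hEv : E v = 0) : v = 0 := by
  suffices key : ∀ r : ℕ, (F ^ r) v = 0 → v = 0 from
    key (N + 1).toNat (h.lower_pow_eq_zero hv (by omega))
  intro r
  induction r with
  | zero => simp
  | succ r ih =>
    intro hr
    have hc : (((r + 1) * (j - r) : ℤ) : K) ≠ 0 :=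
      Int.cast_ne_zero.mpr (mul_ne_zero (by omega) (by omega))
    have hsmul := h.raise_lower_pow hv hEv r
    rw [hr, map_zero, eq_comm, smul_eq_zero] at hsmul
    exact ih (hsmul.resolve_left (by exact_mod_cast hc))

theorem lower_pow_weight_succ_eq_zero (h : IsGradedSl2 A E F N) {w : ℕ} (hv : v ∈ A w)
    (hEv : E v = 0) : (F ^ (w + 1)) v = 0 := by
  refine h.eq_zero_of_raise_eq_zero ?_ (h.lower_pow hv (w + 1)) ?_
  · push_cast
    omega
  · simp [h.raise_lower_pow hv hEv w]

end IsGradedSl2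

end GradedSl2

section WeightedHomogeneous

open MvPolynomial

variable {R σ M : Type*} [AddCommMonoid M] {w : σ → M} {n : M}

theorem isWeightedHomogeneous_mkDerivation [CommSemiring R] {f : σ → MvPolynomial σ R}
    {p : MvPolynomial σ R} {δ : M} (hf : ∀ i, IsWeightedHomogeneous w (f i) (w i + δ))
    (hp : IsWeightedHomogeneous w p n) : IsWeightedHomogeneous w (mkDerivation R f p) (n + δ) := by
  induction hp using IsWeightedHomogeneous.induction_on with
  | zero => simpa using isWeightedHomogeneous_zero R w (n + δ)
  | add p q _ _ hp hq => rw [map_add]; exact hp.add hq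
  | monomial s r hs =>
    rw [mkDerivation_monomial]
    refine Submodule.smul_mem (weightedHomogeneousSubmodule R w (n + δ)) r (sum_mem fun i hi => ?_)
    rw [← hs, ← Finsupp.weight_sub_single_add (Finsupp.mem_support_iff.mp hi),
      add_assoc]
    exact (isWeightedHomogeneous_monomial w _ _ rfl).mul (hf i)

theorem mkDerivation_smul_X_of_isWeightedHomogeneous [CommSemiring R] (φ : M →+ R)
    {p : MvPolynomial σ R} (hp : IsWeightedHomogeneous w p n) :
    mkDerivation R (fun i => φ (w i) • (X i : MvPolynomial σ R)) p = φ n • p := by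
  induction hp using IsWeightedHomogeneous.induction_on with
  | zero => simp
  | add p q _ _ hp hq => rw [map_add, hp, hq, smul_add]
  | monomial s r hs =>
    have hterm : ∀ i ∈ s.support, monomial (s - Finsupp.single i 1) (s i : R) •
        (φ (w i) • (X i : MvPolynomial σ R)) = (s i • φ (w i)) • monomial s 1 := by
      intro i hi
      rw [smul_eq_mul, mul_smul_comm, X, monomial_mul,
        Finsupp.sub_single_one_add (Finsupp.mem_support_iff.mp hi), smul_monomial, smul_monomial]
      simp [mul_comm]
    rw [mkDerivation_monomial, Finsupp.sum, Finset.sum_congr rfl hterm, ← Finset.sum_smul, ← hs,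
      Finsupp.weight_apply, Finsupp.sum, map_sum, smul_comm,
      smul_monomial r, smul_eq_mul, mul_one]
    simp only [map_nsmul]

theorem isWeightedHomogeneous_aeval {σ' M' : Type*} [AddCommMonoid M'] {w' : σ' → M'}
    [CommSemiring R] (φ : M →+ M') {g : σ → MvPolynomial σ' R}
    (hg : ∀ i, IsWeightedHomogeneous w' (g i) (φ (w i))) {p : MvPolynomial σ R}
    (hp : IsWeightedHomogeneous w p n) : IsWeightedHomogeneous w' (aeval g p) (φ n) := by
  induction hp using IsWeightedHomogeneous.induction_on with
  | zero => simpa using isWeightedHomogeneous_zero R w' (φ n)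
  | add p q _ _ hp hq => rw [map_add]; exact hp.add hq
  | monomial s r hs =>
    rw [aeval_monomial, ← Algebra.smul_def]
    refine Submodule.smul_mem (weightedHomogeneousSubmodule R w' (φ n)) r ?_
    rw [← hs, Finsupp.weight_apply, Finsupp.sum, map_sum]
    simp only [map_nsmul]
    exact IsWeightedHomogeneous.prod _ _ _ fun i _ => (hg i).pow (s i)

end WeightedHomogeneous

section BinaryForms

open MvPolynomial

section Defs

variable (K : Type*) [CommRing K] (L : ℕ)

/-- The bidegree of the variable `x_i`: degree `1` and `sl₂`-weight `L - 2i`. -/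
def xWeight (i : Fin (L + 1)) : ℕ × ℤ := (1, L - 2 * i)

/-- The polynomials of degree `d` and `sl₂`-weight `j` in `x_0, …, x_L`. These variables span the
irreducible representation of dimension `L + 1`, so this is a weight space of its `d`-th symmetric
power. -/
abbrev weightSpace (d : ℕ) (j : ℤ) : Submodule K (MvPolynomial (Fin (L + 1)) K) :=
  weightedHomogeneousSubmodule K (xWeight L) (d, j)

/-- The raising operator `E x_i = i x_{i-1}`; the wraparound of `i - 1` in `Fin (L + 1)` is
harmless because its coefficient vanishes. -/
noncomputable def raising :
    Derivation K (MvPolynomial (Fin (L + 1)) K) (MvPolynomial (Fin (L + 1)) K) :=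
  mkDerivation K fun i => (i : ℕ) • X (i - 1)

/-- The lowering operator `F x_i = (L - i) x_{i+1}`, again with a harmless wraparound. -/
noncomputable def lowering :
    Derivation K (MvPolynomial (Fin (L + 1)) K) (MvPolynomial (Fin (L + 1)) K) :=
  mkDerivation K fun i => (i.rev : ℕ) • X (i + 1)

end Defs

variable {K : Type*} [CommRing K] {L d : ℕ} {j : ℤ}

theorem raising_X (i : Fin (L + 1)) :
    raising K L (X i) = (i : ℕ) • (X (i - 1) : MvPolynomial (Fin (L + 1)) K) :=
  mkDerivation_X K _ i

theorem lowering_X (i : Fin (L + 1)) :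
    lowering K L (X i) = (i.rev : ℕ) • (X (i + 1) : MvPolynomial (Fin (L + 1)) K) :=
  mkDerivation_X K _ i

theorem rev_add_val (i : Fin (L + 1)) : (i.rev : ℕ) + i = L := by
  rw [Fin.val_rev]
  omega

theorem rev_mul_val_add_one (i : Fin (L + 1)) :
    (i.rev : ℕ) * (i + 1 : Fin (L + 1)).val = i.rev * (i + 1) := by
  rcases (Fin.le_last i).eq_or_lt with rfl | hi
  · simp
  · rw [Fin.val_add_one_of_lt hi]

theorem val_mul_rev_sub_one (i : Fin (L + 1)) :
    (i : ℕ) * (i - 1 : Fin (L + 1)).rev.val = i * (i.rev + 1) := by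
  simpa [Fin.rev_sub] using rev_mul_val_add_one i.rev

theorem raising_mem {p : MvPolynomial (Fin (L + 1)) K} (hp : p ∈ weightSpace K L d j) :
    raising K L p ∈ weightSpace K L d (j + 2) := by
  refine isWeightedHomogeneous_mkDerivation (δ := ((0, 2) : ℕ × ℤ)) (fun i => ?_) hp
  rcases eq_or_ne i 0 with rfl | hi
  · simpa using isWeightedHomogeneous_zero K (xWeight L) _
  · have hw : xWeight L (i - 1) = xWeight L i + (0, 2) := by
      have hpos : (i : ℕ) ≠ 0 := Fin.val_ne_zero_iff.mpr hi
      simp only [xWeight, Fin.val_sub_one_of_ne_zero hi, Prod.mk_add_mk, Prod.mk.injEq, true_and]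
      omega
    rw [← hw]
    exact nsmul_mem (S := weightedHomogeneousSubmodule K (xWeight L) _)
      (isWeightedHomogeneous_X K _ _) _

theorem lowering_mem {p : MvPolynomial (Fin (L + 1)) K} (hp : p ∈ weightSpace K L d j) :
    lowering K L p ∈ weightSpace K L d (j - 2) := by
  refine isWeightedHomogeneous_mkDerivation (δ := ((0, -2) : ℕ × ℤ)) (fun i => ?_) hp
  rcases (Fin.le_last i).eq_or_lt with rfl | hi
  · simpa using isWeightedHomogeneous_zero K (xWeight L) _
  · have hw : xWeight L (i + 1) = xWeight L i + (0, -2) := by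
      have : (i : ℕ) < L := hi
      simp only [xWeight, Fin.val_add_one_of_lt hi, Prod.mk_add_mk, Prod.mk.injEq, true_and]
      omega
    rw [← hw]
    exact nsmul_mem (S := weightedHomogeneousSubmodule K (xWeight L) _)
      (isWeightedHomogeneous_X K _ _) _

theorem commutator_raising_lowering :
    ⁅raising K L, lowering K L⁆ = mkDerivation K fun i => (((xWeight L i).2 : ℤ) : K) • X i := by
  refine derivation_ext fun i => ?_
  rw [Derivation.commutator_apply, mkDerivation_X, raising_X, lowering_X, map_nsmul, map_nsmul,
    raising_X, lowering_X, smul_smul, smul_smul, rev_mul_val_add_one, val_mul_rev_sub_one,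
    add_sub_cancel_right, sub_add_cancel, ← Nat.cast_smul_eq_nsmul K, ← Nat.cast_smul_eq_nsmul K,
    ← sub_smul]
  have hi : ((i.rev : ℕ) : K) + (i : ℕ) = L := by
    exact_mod_cast congrArg (Nat.cast (R := K)) (rev_add_val i)
  congr 1
  simp only [xWeight]
  push_cast
  linear_combination hi

theorem raising_lowering {p : MvPolynomial (Fin (L + 1)) K} (hp : p ∈ weightSpace K L d j) :
    raising K L (lowering K L p) = lowering K L (raising K L p) + (j : K) • p := by
  rw [← sub_eq_iff_eq_add', ← Derivation.commutator_apply, commutator_raising_lowering]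
  have h := mkDerivation_smul_X_of_isWeightedHomogeneous
    ((Int.castAddHom K).comp (AddMonoidHom.snd ℕ ℤ)) hp
  simpa only [AddMonoidHom.comp_apply, Int.coe_castAddHom, AddMonoidHom.coe_snd] using h

theorem weight_xWeight (s : Fin (L + 1) →₀ ℕ) :
    Finsupp.weight (xWeight L) s = (∑ i, s i, ∑ i, s i * ((L : ℤ) - 2 * i)) := by
  rw [Finsupp.weight_apply, Finsupp.sum_fintype _ _ (by simp)]
  ext <;> simp [xWeight, Prod.fst_sum, Prod.snd_sum]

theorem eq_zero_of_mem_weightSpace {p : MvPolynomial (Fin (L + 1)) K}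
    (hp : p ∈ weightSpace K L d j) (hj : ((L * d : ℕ) : ℤ) < |j|) : p = 0 := by
  ext s
  rw [coeff_zero]
  by_contra hs
  have hw := hp hs
  rw [weight_xWeight, Prod.mk.injEq] at hw
  refine hj.not_ge ?_
  calc |j| = |∑ i, s i * ((L : ℤ) - 2 * i)| := by rw [hw.2]
    _ ≤ ∑ i, |s i * ((L : ℤ) - 2 * i)| := Finset.abs_sum_le_sum_abs _ _
    _ ≤ ∑ i, (s i * L : ℤ) := by
      refine Finset.sum_le_sum fun i _ => ?_
      rw [abs_mul, Nat.abs_cast]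
      gcongr
      rw [abs_le]
      omega
    _ = (L * d : ℕ) := by
      rw [← Finset.sum_mul, ← hw.1]
      push_cast
      ring

theorem isGradedSl2_weightSpace (K : Type*) [Field K] (L d : ℕ) :
    IsGradedSl2 (weightSpace K L d) (raising K L).toLinearMap (lowering K L).toLinearMap
      (L * d : ℕ) where
  raise := raising_mem
  lower := lowering_mem
  commutator := raising_lowering
  eq_zero_of_lt := eq_zero_of_mem_weightSpace

end BinaryForms

section BoxMultisets

open MvPolynomial Module

/-- The multisets of `d` natural numbers at most `L` with sum `k`: partitions of `k` in a `d × L`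
rectangle, padded with zeros to have exactly `d` parts. -/
def boxMultisets (d L k : ℕ) : Set (Multiset ℕ) :=
  {t | Multiset.card t = d ∧ t.sum = k ∧ ∀ i ∈ t, i ≤ L}

theorem image_add_replicate_zero (k l m : ℕ) :
    (fun π : Nat.Partition k => π.parts + Multiset.replicate (l - Multiset.card π.parts) 0) ''
      {π | Multiset.card π.parts ≤ l ∧ ∀ i ∈ π.parts, i ≤ m} = boxMultisets l m k := by
  ext t
  constructor
  · rintro ⟨π, ⟨hcard, hle⟩, rfl⟩
    refine ⟨by simp [hcard], by simp [π.parts_sum], fun i hi => ?_⟩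
    rcases Multiset.mem_add.mp hi with hi | hi
    · exact hle i hi
    · simp [Multiset.eq_of_mem_replicate hi]
  · rintro ⟨rfl, hsum, hle⟩
    refine ⟨Nat.Partition.ofSums k t hsum, ⟨Multiset.card_le_card (Multiset.filter_le _ _),
      fun i hi => hle i (Multiset.mem_of_mem_filter hi)⟩, ?_⟩
    have hzeros : t.filter (¬ · ≠ 0) =
        Multiset.replicate (Multiset.card t - Multiset.card (t.filter (· ≠ 0))) 0 := by
      have hcard := congrArg Multiset.card (Multiset.filter_add_not (· ≠ 0) t)
      rw [Multiset.card_add] at hcard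
      exact Multiset.eq_replicate.mpr
        ⟨by omega, fun b hb => by simpa using (Multiset.mem_filter.mp hb).2⟩
    change t.filter (· ≠ 0) + Multiset.replicate _ 0 = t
    conv_rhs => rw [← Multiset.filter_add_not (· ≠ 0) t, hzeros]
    rfl

theorem rectPartitions_eq_ncard_boxMultisets (k l m : ℕ) :
    rectPartitions k l m = (boxMultisets l m k).ncard := by
  rw [← image_add_replicate_zero, Set.ncard_image_of_injective]
  · rfl
  · intro π₁ π₂ hπ
    have h : ∀ π : Nat.Partition k,
        (π.parts + Multiset.replicate (l - Multiset.card π.parts) 0).filter (· ≠ 0) = π.parts := by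
      intro π
      rw [Multiset.filter_add, Multiset.filter_eq_self.mpr fun i hi => (π.parts_pos hi).ne',
        Multiset.filter_eq_nil.mpr fun i hi => by simpa using Multiset.eq_of_mem_replicate hi,
        add_zero]
    apply Nat.Partition.ext
    rw [← h π₁, ← h π₂]
    exact congrArg _ hπ

theorem weight_xWeight_eq_iff {L d k : ℕ} (s : Fin (L + 1) →₀ ℕ) :
    Finsupp.weight (xWeight L) s = (d, (L * d : ℤ) - 2 * k) ↔
      Multiset.card (s.toMultiset.map Fin.val) = d ∧ (s.toMultiset.map Fin.val).sum = k := by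
  have hcard : Multiset.card (s.toMultiset.map Fin.val) = ∑ i, s i := by
    rw [Multiset.card_map, Finsupp.card_toMultiset, Finsupp.sum_fintype _ _ (by simp)]
    rfl
  have hsum : (s.toMultiset.map Fin.val).sum = ∑ i, s i * (i : ℕ) := by
    rw [Finsupp.toMultiset_map, Finsupp.sum_toMultiset,
      Finsupp.sum_mapDomain_index (by simp) (by intros; ring), Finsupp.sum_fintype _ _ (by simp)]
    simp
  have hweight : ∑ i, s i * ((L : ℤ) - 2 * i) =
      L * (∑ i, s i : ℕ) - 2 * (∑ i, s i * (i : ℕ) : ℕ) := by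
    push_cast
    rw [Finset.mul_sum, Finset.mul_sum, ← Finset.sum_sub_distrib]
    exact Finset.sum_congr rfl fun i _ => by ring
  rw [weight_xWeight, hcard, hsum, Prod.mk.injEq]
  refine and_congr_right ?_
  rintro rfl
  rw [hweight, sub_right_inj, mul_right_inj' two_ne_zero, Nat.cast_inj]

theorem image_toMultiset_map_val (L d k : ℕ) :
    (fun s : Fin (L + 1) →₀ ℕ => s.toMultiset.map Fin.val) ''
      {s | Finsupp.weight (xWeight L) s = (d, (L * d : ℤ) - 2 * k)} = boxMultisets d L k := by
  ext t
  constructor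
  · rintro ⟨s, hs, rfl⟩
    obtain ⟨hcard, hsum⟩ := (weight_xWeight_eq_iff s).mp hs
    refine ⟨hcard, hsum, fun i hi => ?_⟩
    obtain ⟨a, -, rfl⟩ := Multiset.mem_map.mp hi
    exact Nat.lt_succ_iff.mp a.isLt
  · rintro ⟨hcard, hsum, hle⟩
    lift t to Multiset (Fin (L + 1)) using fun i hi => Nat.lt_succ_of_le (hle i hi)
    exact ⟨t.toFinsupp, (weight_xWeight_eq_iff _).mpr (by simp [hcard, hsum]), by simp⟩

theorem injective_toMultiset_map_val (L : ℕ) :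
    Function.Injective fun s : Fin (L + 1) →₀ ℕ => s.toMultiset.map Fin.val :=
  (Multiset.map_injective Fin.val_injective).comp Multiset.toFinsupp.symm.injective

theorem finite_weight_xWeight_eq (L d : ℕ) (j : ℤ) :
    {s : Fin (L + 1) →₀ ℕ | Finsupp.weight (xWeight L) s = (d, j)}.Finite := by
  refine (Finsupp.finite_of_nat_weight_eq (fun _ : Fin (L + 1) => 1) (by simp) d).subset ?_
  intro s hs
  rw [Set.mem_ofPred_eq, weight_xWeight, Prod.mk.injEq] at hs
  simp [Finsupp.weight_apply, Finsupp.sum_fintype, hs.1]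

theorem finite_boxMultisets (d L k : ℕ) : (boxMultisets d L k).Finite := by
  rw [← image_toMultiset_map_val]
  exact (finite_weight_xWeight_eq L d _).image _

instance (K : Type*) [Field K] (L d : ℕ) (j : ℤ) : Module.Finite K (weightSpace K L d j) := by
  have := (finite_weight_xWeight_eq L d j).to_subtype
  rw [weightSpace, weightedHomogeneousSubmodule_eq_finsupp_supported]
  exact Module.Finite.of_basis (basisRestrictSupport K _)

theorem finrank_weightSpace (K : Type*) [Field K] (L d k : ℕ) :
    finrank K (weightSpace K L d (L * d - 2 * k)) = rectPartitions k d L := by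
  rw [rectPartitions_eq_ncard_boxMultisets, ← image_toMultiset_map_val,
    Set.ncard_image_of_injective _ (injective_toMultiset_map_val L), weightSpace,
    weightedHomogeneousSubmodule_eq_finsupp_supported]
  exact finrank_eq_nat_card_basis (basisRestrictSupport K _)

end BoxMultisets

section HighestWeight

open MvPolynomial Module

theorem finrank_map_add_finrank_inf_ker {K V V' : Type*} [DivisionRing K] [AddCommGroup V]
    [AddCommGroup V'] [Module K V] [Module K V'] (f : V →ₗ[K] V') (A : Submodule K V)
    [Module.Finite K A] :
    finrank K (A.map f) + finrank K (A ⊓ LinearMap.ker f : Submodule K V) = finrank K A := by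
  rw [← LinearMap.finrank_range_add_finrank_ker (f.domRestrict A), LinearMap.range_domRestrict,
    LinearMap.ker_domRestrict, ← Submodule.finrank_map_subtype_eq, Submodule.map_comap_subtype]

/-- The highest weight vectors of weight `j` among the polynomials of degree `d`. -/
noncomputable def highestWeightSpace (K : Type*) [Field K] (L d : ℕ) (j : ℤ) :
    Submodule K (MvPolynomial (Fin (L + 1)) K) :=
  weightSpace K L d j ⊓ LinearMap.ker (raising K L).toLinearMap

variable {K : Type*} [Field K] {L d : ℕ} {j : ℤ}

theorem mem_highestWeightSpace {p : MvPolynomial (Fin (L + 1)) K} :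
    p ∈ highestWeightSpace K L d j ↔ p ∈ weightSpace K L d j ∧ raising K L p = 0 := by
  simp [highestWeightSpace]

instance : Module.Finite K (highestWeightSpace K L d j) :=
  Submodule.finiteDimensional_of_le (inf_le_left : _ ≤ weightSpace K L d j)

theorem map_raising_weightSpace_le :
    (weightSpace K L d j).map (raising K L).toLinearMap ≤ weightSpace K L d (j + 2) := by
  rintro _ ⟨p, hp, rfl⟩
  exact raising_mem hp

/-- The multiplicity, in the polynomials of degree `d`, of the irreducible `sl₂`-module of highest
weight `L * d - 2 * k`. -/
noncomputable def hwMult (L d k : ℕ) : ℕ :=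
  finrank ℝ (highestWeightSpace ℝ L d (L * d - 2 * k))

theorem finrank_map_raising_add_hwMult (L d k : ℕ) :
    finrank ℝ ((weightSpace ℝ L d (L * d - 2 * k)).map (raising ℝ L).toLinearMap) + hwMult L d k =
      rectPartitions k d L := by
  rw [hwMult, highestWeightSpace, finrank_map_add_finrank_inf_ker, finrank_weightSpace]

theorem sub_two_mul_succ_add_two (n : ℤ) (k : ℕ) : n - 2 * (k + 1 : ℕ) + 2 = n - 2 * k := by
  push_cast
  ring

theorem hwMult_zero (L d : ℕ) : hwMult L d 0 = rectPartitions 0 d L := by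
  have hmap : (weightSpace ℝ L d (L * d - 2 * (0 : ℕ))).map (raising ℝ L).toLinearMap = ⊥ := by
    rw [eq_bot_iff]
    rintro _ ⟨p, hp, rfl⟩
    refine eq_zero_of_mem_weightSpace (raising_mem hp) ?_
    push_cast
    exact (by omega : (L * d : ℤ) < L * d - 2 * 0 + 2).trans_le (le_abs_self _)
  rw [← finrank_map_raising_add_hwMult L d 0, hmap, finrank_bot, zero_add]

theorem rectPartitions_succ_le (L d k : ℕ) :
    rectPartitions (k + 1) d L ≤ rectPartitions k d L + hwMult L d (k + 1) := by
  rw [← finrank_map_raising_add_hwMult L d (k + 1), ← finrank_weightSpace ℝ L d k,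
    ← sub_two_mul_succ_add_two (L * d) k]
  gcongr
  exact Submodule.finrank_mono map_raising_weightSpace_le

theorem rectPartitions_add_hwMult_succ {L d k : ℕ} (hk : 2 * (k + 1) ≤ L * d) :
    rectPartitions k d L + hwMult L d (k + 1) = rectPartitions (k + 1) d L := by
  have hpos : (0 : ℤ) < L * d - 2 * (k + 1 : ℕ) + 2 := by
    zify at hk
    push_cast
    linarith
  have hmap : (weightSpace ℝ L d (L * d - 2 * (k + 1 : ℕ))).map (raising ℝ L).toLinearMap =
      weightSpace ℝ L d (L * d - 2 * (k + 1 : ℕ) + 2) := by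
    refine le_antisymm map_raising_weightSpace_le fun p hp => ?_
    obtain ⟨u, hu, rfl⟩ := (isGradedSl2_weightSpace ℝ L d).exists_raise_eq hpos hp
    exact ⟨u, by simpa using hu, rfl⟩
  rw [← finrank_map_raising_add_hwMult L d (k + 1), hmap, sub_two_mul_succ_add_two,
    finrank_weightSpace]

theorem hwMult_eq_zero {L d k : ℕ} (hk : L * d < 2 * k) : hwMult L d k = 0 := by
  have hneg : (L * d : ℤ) - 2 * k < 0 := by
    zify at hk
    linarith
  have hbot : highestWeightSpace ℝ L d (L * d - 2 * k) = ⊥ := eq_bot_iff.mpr fun p hp =>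
    have ⟨hpA, hpE⟩ := mem_highestWeightSpace.mp hp
    (isGradedSl2_weightSpace ℝ L d).eq_zero_of_raise_eq_zero hneg hpA hpE
  rw [hwMult, hbot, finrank_bot]

theorem rectPartitions_le_sum_hwMult (L d k : ℕ) :
    rectPartitions k d L ≤ ∑ i ∈ Finset.range (L * d / 2 + 1), hwMult L d i := by
  have hle : rectPartitions k d L ≤ ∑ i ∈ Finset.range (k + 1), hwMult L d i := by
    induction k with
    | zero => simp [hwMult_zero]
    | succ k ih =>
      rw [Finset.sum_range_succ]
      exact (rectPartitions_succ_le L d k).trans (by gcongr)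
  refine hle.trans (Finset.sum_le_sum_of_ne_zero fun i _ hi => ?_)
  contrapose! hi
  rw [Finset.mem_range, not_lt] at hi
  exact hwMult_eq_zero (by omega)

-- Multiplication by a highest weight vector of the second kind embeds those of the first kind,
-- since `E` is a derivation and polynomial rings are domains.
theorem hwMult_le_hwMult_add {L d₁ d₂ k₁ k₂ : ℕ} (h : 0 < hwMult L d₂ k₂) :
    hwMult L d₁ k₁ ≤ hwMult L (d₁ + d₂) (k₁ + k₂) := by
  have hne : highestWeightSpace ℝ L d₂ (L * d₂ - 2 * k₂) ≠ ⊥ := by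
    intro hbot
    rw [hwMult, hbot, finrank_bot] at h
    exact h.ne rfl
  obtain ⟨g, hg, hg0⟩ := Submodule.exists_mem_ne_zero_of_ne_bot hne
  obtain ⟨hgA, hgE⟩ := mem_highestWeightSpace.mp hg
  have hmul : ∀ f ∈ highestWeightSpace ℝ L d₁ (L * d₁ - 2 * k₁), LinearMap.mulRight ℝ g f ∈
      highestWeightSpace ℝ L (d₁ + d₂) (L * (d₁ + d₂ : ℕ) - 2 * (k₁ + k₂ : ℕ)) := by
    intro f hf
    obtain ⟨hfA, hfE⟩ := mem_highestWeightSpace.mp hf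
    refine mem_highestWeightSpace.mpr ⟨?_, by simp [hfE, hgE]⟩
    have hw : (d₁, (L * d₁ : ℤ) - 2 * k₁) + (d₂, (L * d₂ : ℤ) - 2 * k₂) =
        (d₁ + d₂, (L * (d₁ + d₂ : ℕ) : ℤ) - 2 * (k₁ + k₂ : ℕ)) :=
      Prod.ext rfl (by rw [Prod.snd_add]; push_cast; ring)
    rw [weightSpace, ← hw]
    exact hfA.mul hgA
  refine LinearMap.finrank_le_finrank_of_injective (f := (LinearMap.mulRight ℝ g).restrict hmul)
    fun f₁ f₂ hf => Subtype.ext ?_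
  exact mul_right_cancel₀ hg0 (congrArg Subtype.val hf)

end HighestWeight

section Pairing

open MvPolynomial Module

-- The vectors `ι x` span at most `finrank R W` dimensions over the fraction field of `R`, and by
-- anisotropy `x` is determined by its pairings with a maximal independent family among them.
theorem finrank_le_of_anisotropic {K R W M : Type*} [Field K] [CommRing R] [IsDomain R]
    [Algebra K R] [AddCommGroup W] [Module R W] [Module K W] [IsScalarTower K R W]
    [Module.Finite R W] [AddCommGroup M] [Module K M] {τ : R →+* R} (hτ : Function.Injective τ)
    (B : W →ₗ[R] W →ₛₗ[τ] R) (ι : M →ₗ[K] W) (hB : ∀ x, B (ι x) (ι x) = 0 → x = 0)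
    (I : Submodule K R) [Module.Finite K I] (hI : ∀ x y, B (ι x) (ι y) ∈ I) :
    finrank K M ≤ finrank R W * finrank K I := by
  obtain ⟨s, hs, hmax⟩ := exists_maximal_linearIndepOn R ι
  have : Finite s := LinearIndependent.finite hs
  have := Fintype.ofFinite s
  let Φ : M →ₗ[K] s → I := LinearMap.pi fun y =>
    (((B.flip (ι y)).restrictScalars K).comp ι).codRestrict I fun x => hI x y
  have hΦ : Function.Injective Φ := by
    refine (injective_iff_map_eq_zero Φ).mpr fun x hx => hB x ?_
    have hspan : Submodule.span R (ι '' s) ≤ LinearMap.ker (B (ι x)) := by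
      rw [Submodule.span_le]
      rintro _ ⟨y, hy, rfl⟩
      exact congrArg Subtype.val (congrFun hx ⟨y, hy⟩)
    by_cases hxs : x ∈ s
    · exact hspan (Submodule.subset_span (Set.mem_image_of_mem ι hxs))
    · obtain ⟨c, hc, hmem⟩ := hmax x hxs
      have hzero := hspan hmem
      rw [LinearMap.mem_ker, map_smulₛₗ, smul_eq_mul] at hzero
      exact (mul_eq_zero.mp hzero).resolve_left ((map_ne_zero_iff τ hτ).mpr hc)
  calc finrank K M ≤ finrank K (s → I) := LinearMap.finrank_le_finrank_of_injective hΦ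
    _ = Fintype.card s * finrank K I := by simp [Module.finrank_pi_fintype]
    _ ≤ finrank R W * finrank K I := by
      gcongr
      exact LinearIndependent.fintype_card_le_finrank hs

/-- The Weyl element of `SL₂` acting on polynomials by `x_i ↦ (-1)^i x_{L-i}`; it negates weights
and intertwines `E` with `-F`. -/
noncomputable def weylTwist (K : Type*) [CommRing K] (L : ℕ) :
    MvPolynomial (Fin (L + 1)) K →ₐ[K] MvPolynomial (Fin (L + 1)) K :=
  aeval fun i => (-1 : K) ^ (i : ℕ) • X i.rev

section Twist

variable {K : Type*} [CommRing K] {L d : ℕ} {j : ℤ}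

theorem weylTwist_X (i : Fin (L + 1)) :
    weylTwist K L (X i) = (-1 : K) ^ (i : ℕ) • X i.rev :=
  aeval_X _ i

theorem weylTwist_weylTwist_X (i : Fin (L + 1)) :
    weylTwist K L (weylTwist K L (X i)) = (-1 : K) ^ L • X i := by
  have hpow : (-1 : K) ^ (i : ℕ) * (-1) ^ (i.rev : ℕ) = (-1) ^ L := by
    rw [← pow_add, add_comm, rev_add_val]
  rw [weylTwist_X, map_smul, weylTwist_X, Fin.rev_rev, smul_smul, hpow]

theorem injective_weylTwist : Function.Injective (weylTwist K L) := by
  have h : ((weylTwist K L).comp (weylTwist K L)).comp ((weylTwist K L).comp (weylTwist K L)) =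
      AlgHom.id K _ := algHom_ext fun i => by
    simp only [AlgHom.comp_apply, weylTwist_weylTwist_X, map_smul, smul_smul, ← mul_pow,
      neg_mul_neg, one_mul, one_pow, one_smul, AlgHom.id_apply]
  refine Function.LeftInverse.injective
    (g := weylTwist K L ∘ weylTwist K L ∘ weylTwist K L) fun p => ?_
  exact DFunLike.congr_fun h p

theorem weylTwist_mem {p : MvPolynomial (Fin (L + 1)) K} (hp : p ∈ weightSpace K L d j) :
    weylTwist K L p ∈ weightSpace K L d (-j) := by
  refine isWeightedHomogeneous_aeval
    ((AddMonoidHom.id ℕ).prodMap (negAddMonoidHom : ℤ →+ ℤ)) (fun i => ?_) hp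
  have hw : xWeight L i.rev = (1, -((L : ℤ) - 2 * i)) := by
    have hi := rev_add_val i
    rw [xWeight, Prod.mk.injEq]
    omega
  change IsWeightedHomogeneous _ _ (1, -((L : ℤ) - 2 * i))
  rw [← hw]
  exact Submodule.smul_mem (weightedHomogeneousSubmodule K (xWeight L) _) _
    (isWeightedHomogeneous_X K _ _)

theorem raising_weylTwist (p : MvPolynomial (Fin (L + 1)) K) :
    raising K L (weylTwist K L p) = -weylTwist K L (lowering K L p) := by
  induction p using MvPolynomial.induction_on with
  | C r => simp [← algebraMap_eq]
  | add p q hp hq => rw [map_add, map_add, hp, hq, map_add, map_add, neg_add]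
  | mul_X p i hp =>
    have hX : raising K L (weylTwist K L (X i)) = -weylTwist K L (lowering K L (X i)) := by
      rw [weylTwist_X, Derivation.map_smul, raising_X, lowering_X, map_nsmul, weylTwist_X,
        Fin.rev_add]
      rcases (Fin.le_last i).eq_or_lt with rfl | hi
      · simp
      · rw [Fin.val_add_one_of_lt hi, pow_succ, mul_neg_one, neg_smul, smul_neg, neg_neg,
          smul_comm]
    rw [map_mul, Derivation.leibniz, Derivation.leibniz, hp, hX, map_add, smul_eq_mul, smul_eq_mul,
      smul_eq_mul, smul_eq_mul, map_mul, map_mul]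
    ring

end Twist

theorem factorial_div_factorial_succ {w i : ℕ} (hi : i < w) :
    ((w - (i + 1)).factorial / (i + 1).factorial * ((i + 1) * (w - i)) : ℝ) =
      (w - i).factorial / i.factorial := by
  obtain ⟨r, rfl⟩ := Nat.exists_eq_add_of_le hi
  rw [show i.succ + r - (i + 1) = r by omega, show i.succ + r - i = r + 1 by omega,
    Nat.factorial_succ, Nat.factorial_succ]
  push_cast
  field_simp
  ring

/-- The sesquilinear form over the polynomial ring which restricts to an `sl₂`-invariant pairing on
the strings `f, F f, …, F ^ w f` generated by highest weight vectors `f` of weight `w`. -/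
noncomputable def weylForm (L w : ℕ) :
    (Fin (w + 1) → MvPolynomial (Fin (L + 1)) ℝ) →ₗ[MvPolynomial (Fin (L + 1)) ℝ]
      (Fin (w + 1) → MvPolynomial (Fin (L + 1)) ℝ) →ₛₗ[(weylTwist ℝ L).toRingHom]
        MvPolynomial (Fin (L + 1)) ℝ :=
  LinearMap.mk₂'ₛₗ _ _
    (fun x y => ∑ i : Fin (w + 1),
      ((w - i).factorial / (i : ℕ).factorial : ℝ) • (x i * weylTwist ℝ L (y i)))
    (fun x x' y => by simp only [Pi.add_apply, add_mul, smul_add, Finset.sum_add_distrib])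
    (fun c x y => by
      simp only [Pi.smul_apply, smul_eq_mul, mul_assoc, mul_smul_comm, Finset.mul_sum,
        RingHom.id_apply])
    (fun x y y' => by
      simp only [Pi.add_apply, map_add, mul_add, smul_add, Finset.sum_add_distrib])
    (fun c x y => by
      simp only [Pi.smul_apply, smul_eq_mul, map_mul, mul_left_comm, mul_smul_comm,
        Finset.mul_sum, AlgHom.toRingHom_eq_coe, RingHom.coe_coe])

theorem weylForm_apply {L w : ℕ} (x y : Fin (w + 1) → MvPolynomial (Fin (L + 1)) ℝ) :
    weylForm L w x y = ∑ i : Fin (w + 1),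
      ((w - i).factorial / (i : ℕ).factorial : ℝ) • (x i * weylTwist ℝ L (y i)) :=
  rfl

/-- The `sl₂`-string `f, F f, …, F ^ w f`. -/
noncomputable def loweringString (L w : ℕ) : MvPolynomial (Fin (L + 1)) ℝ →ₗ[ℝ]
    (Fin (w + 1) → MvPolynomial (Fin (L + 1)) ℝ) :=
  LinearMap.pi fun i => (lowering ℝ L).toLinearMap ^ (i : ℕ)

section Invariance

variable {L d w : ℕ} {f g : MvPolynomial (Fin (L + 1)) ℝ}

theorem raising_weylForm_loweringString (hf : f ∈ highestWeightSpace ℝ L d w)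
    (hg : g ∈ highestWeightSpace ℝ L d w) :
    raising ℝ L (weylForm L w (loweringString L w f) (loweringString L w g)) = 0 := by
  obtain ⟨hfA, hfE⟩ := mem_highestWeightSpace.mp hf
  obtain ⟨hgA, hgE⟩ := mem_highestWeightSpace.mp hg
  have hsl := isGradedSl2_weightSpace ℝ L d
  set F := (lowering ℝ L).toLinearMap
  set α : ℕ → ℝ := fun i => (w - i).factorial / i.factorial
  let u : ℕ → MvPolynomial (Fin (L + 1)) ℝ := fun i =>
    α i • (raising ℝ L ((F ^ i) f) * weylTwist ℝ L ((F ^ i) g))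
  have hu : ∀ i ∈ Finset.range (w + 1),
      α i • ((F ^ i) f * weylTwist ℝ L ((F ^ (i + 1)) g)) = u (i + 1) := by
    intro i hi
    have hraise : raising ℝ L ((F ^ (i + 1)) f) = ((i + 1) * (w - i) : ℝ) • (F ^ i) f := by
      exact_mod_cast hsl.raise_lower_pow hfA hfE i
    rcases (Nat.lt_succ_iff.mp (Finset.mem_range.mp hi)).eq_or_lt with rfl | hiw
    · simp [u, hsl.lower_pow_weight_succ_eq_zero hgA hgE]
    · simp only [u]
      rw [hraise, smul_mul_assoc, smul_smul, factorial_div_factorial_succ hiw]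
  have hterm : ∀ i ∈ Finset.range (w + 1),
      raising ℝ L (α i • ((F ^ i) f * weylTwist ℝ L ((F ^ i) g))) = u i - u (i + 1) := by
    intro i hi
    rw [← hu i hi, pow_succ', Module.End.mul_apply, Derivation.map_smul, Derivation.leibniz,
      raising_weylTwist, smul_eq_mul, smul_eq_mul]
    simp only [u, F, Derivation.coeFn_coe, ← smul_sub]
    ring_nf
  have hw1 : u (w + 1) = 0 := by
    simp [u, hsl.lower_pow_weight_succ_eq_zero hgA hgE]
  have hform : weylForm L w (loweringString L w f) (loweringString L w g) =
      ∑ i ∈ Finset.range (w + 1), α i • ((F ^ i) f * weylTwist ℝ L ((F ^ i) g)) := by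
    rw [weylForm_apply, Finset.sum_range]
    rfl
  rw [hform, map_sum, Finset.sum_congr rfl hterm, Finset.sum_range_sub', hw1, sub_zero]
  simp [u, hfE]

theorem weylForm_loweringString_mem (hf : f ∈ highestWeightSpace ℝ L d w)
    (hg : g ∈ highestWeightSpace ℝ L d w) :
    weylForm L w (loweringString L w f) (loweringString L w g) ∈
      highestWeightSpace ℝ L (d + d) 0 := by
  refine mem_highestWeightSpace.mpr ⟨?_, raising_weylForm_loweringString hf hg⟩
  have hsl := isGradedSl2_weightSpace ℝ L d
  rw [weylForm_apply]
  refine Submodule.sum_mem _ fun i _ => Submodule.smul_mem _ _ ?_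
  have h := IsWeightedHomogeneous.mul (hsl.lower_pow (mem_highestWeightSpace.mp hf).1 i)
    (weylTwist_mem (hsl.lower_pow (mem_highestWeightSpace.mp hg).1 i))
  rwa [Prod.mk_add_mk, add_neg_cancel] at h

end Invariance

theorem eq_zero_of_sum_smul_mul_map_conj_eq_zero {ι σ : Type*} [Fintype ι] {α : ι → ℝ}
    (hα : ∀ i, 0 < α i) {p : ι → MvPolynomial σ ℂ}
    (h : ∑ i, α i • (p i * map (starRingEnd ℂ) (p i)) = 0) (i : ι) : p i = 0 := by
  refine MvPolynomial.funext_set (fun _ => Set.range ((↑) : ℝ → ℂ))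
    (fun _ => Set.infinite_range_of_injective Complex.ofReal_injective) fun x hx => ?_
  have hconj : (starRingEnd ℂ) ∘ x = x := by
    funext a
    obtain ⟨y, hy⟩ := hx a (Set.mem_univ a)
    rw [Function.comp_apply, ← hy, Complex.conj_ofReal]
  have heval : ∀ q : MvPolynomial σ ℂ,
      eval x (map (starRingEnd ℂ) q) = (starRingEnd ℂ) (eval x q) := by
    intro q
    rw [eval_map, eval, coe_eval₂Hom, eval₂_comp_left, hconj, RingHom.comp_id]
  have hsum : ∑ i, α i * Complex.normSq (eval x (p i)) = 0 := by
    have hx0 := congrArg (eval x) h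
    simp only [map_sum, ← algebraMap_smul ℂ (α _), smul_eval, map_mul, heval, Complex.mul_conj,
      map_zero, Complex.coe_algebraMap] at hx0
    exact_mod_cast hx0
  have hi := (Finset.sum_eq_zero_iff_of_nonneg fun i _ =>
    mul_nonneg (hα i).le (Complex.normSq_nonneg _)).mp hsum i (Finset.mem_univ i)
  rw [map_zero]
  exact Complex.normSq_eq_zero.mp ((mul_eq_zero.mp hi).resolve_left (hα i).ne')

/-- A change of variables over `ℂ` whose image of the real polynomials carries complex conjugation
as `weylTwist`, for even `L`. -/
noncomputable def realForm (L : ℕ) :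
    MvPolynomial (Fin (L + 1)) ℝ →ₐ[ℝ] MvPolynomial (Fin (L + 1)) ℂ :=
  aeval fun i => C (1 + Complex.I) * X i + C ((1 - Complex.I) * (-1) ^ (i : ℕ)) * X i.rev

theorem realForm_X {L : ℕ} (i : Fin (L + 1)) : realForm L (X i) =
    C (1 + Complex.I) * X i + C ((1 - Complex.I) * (-1) ^ (i : ℕ)) * X i.rev :=
  aeval_X _ i

section EvenWeight

variable {L : ℕ}

theorem neg_one_pow_val_rev (hL : Even L) (i : Fin (L + 1)) :
    (-1 : ℂ) ^ (i.rev : ℕ) = (-1) ^ (i : ℕ) := by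
  have h : (-1 : ℂ) ^ (i.rev : ℕ) * (-1) ^ (i : ℕ) = 1 := by
    rw [← pow_add, rev_add_val, hL.neg_one_pow]
  rw [eq_inv_of_mul_eq_one_left h, ← inv_pow, inv_neg_one]

theorem realForm_weylTwist (hL : Even L) (p : MvPolynomial (Fin (L + 1)) ℝ) :
    realForm L (weylTwist ℝ L p) = map (starRingEnd ℂ) (realForm L p) := by
  have h : (realForm L).comp (weylTwist ℝ L) =
      (mapAlgHom Complex.conjAe.toAlgHom).comp (realForm L) := by
    refine algHom_ext fun i => ?_
    have hsq : (-1 : ℂ) ^ (i : ℕ) * (-1) ^ (i : ℕ) = 1 := by simp [← mul_pow]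
    have hconj : mapAlgHom Complex.conjAe.toAlgHom (realForm L (X i)) =
        C (1 - Complex.I) * X i + C ((1 + Complex.I) * (-1) ^ (i : ℕ)) * X i.rev := by
      simp [realForm_X, sub_eq_add_neg]
    rw [AlgHom.comp_apply, AlgHom.comp_apply, hconj, weylTwist_X, map_smul, realForm_X,
      neg_one_pow_val_rev hL, Fin.rev_rev, ← algebraMap_smul ℂ, smul_eq_C_mul]
    simp only [Complex.coe_algebraMap, Complex.ofReal_pow, Complex.ofReal_neg, Complex.ofReal_one]
    rw [mul_add, ← mul_assoc, ← mul_assoc, ← C_mul, ← C_mul, mul_left_comm, hsq, mul_one,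
      mul_comm ((-1) ^ (i : ℕ)) (1 + Complex.I)]
    exact add_comm _ _
  exact DFunLike.congr_fun h p

theorem injective_realForm (hL : Even L) : Function.Injective (realForm L) := by
  let ψ : MvPolynomial (Fin (L + 1)) ℂ →ₐ[ℂ] MvPolynomial (Fin (L + 1)) ℂ := aeval fun i =>
    C (4 * Complex.I)⁻¹ * (C (1 + Complex.I) * X i - C ((1 - Complex.I) * (-1) ^ (i : ℕ)) * X i.rev)
  have hψ : ((ψ.restrictScalars ℝ).comp (realForm L)) = mapAlgHom (Algebra.ofId ℝ ℂ) := by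
    refine algHom_ext fun i => ?_
    have hsq : (-1 : ℂ) ^ (i : ℕ) * (-1) ^ (i : ℕ) = 1 := by simp [← mul_pow]
    have hX : ψ (C (1 + Complex.I) * X i + C ((1 - Complex.I) * (-1) ^ (i : ℕ)) * X i.rev) =
        C ((4 * Complex.I)⁻¹ * ((1 + Complex.I) * (1 + Complex.I) - (1 - Complex.I) *
          (1 - Complex.I) * ((-1) ^ (i : ℕ) * (-1) ^ (i : ℕ)))) * X i := by
      simp only [ψ, map_add, map_mul, algHom_C, algebraMap_eq, aeval_X, neg_one_pow_val_rev hL,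
        Fin.rev_rev, map_sub]
      ring
    have hone : (4 * Complex.I)⁻¹ * ((1 + Complex.I) * (1 + Complex.I) - (1 - Complex.I) *
        (1 - Complex.I) * 1) = 1 := by
      have := Complex.I_ne_zero
      field_simp
      ring
    rw [AlgHom.comp_apply, realForm_X, AlgHom.restrictScalars_apply, hX, hsq, hone]
    simp
  have hinj : Function.Injective (ψ.restrictScalars ℝ ∘ realForm L) := by
    rw [← AlgHom.coe_comp, hψ]
    exact map_injective _ Complex.ofReal_injective
  exact Function.Injective.of_comp hinj

theorem eq_zero_of_weylForm_self_eq_zero (hL : Even L) {w : ℕ}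
    {x : Fin (w + 1) → MvPolynomial (Fin (L + 1)) ℝ} (hx : weylForm L w x x = 0)
    (i : Fin (w + 1)) : x i = 0 := by
  have h := congrArg (realForm L) hx
  simp only [weylForm_apply, map_sum, map_smul, map_mul, map_zero, realForm_weylTwist hL] at h
  refine (map_eq_zero_iff _ (injective_realForm hL)).mp
    (eq_zero_of_sum_smul_mul_map_conj_eq_zero (fun i => ?_) h i)
  positivity

theorem hwMult_le_mul_hwMult_add_self {d k w : ℕ} (hL : Even L) (hw : 2 * k + w = L * d) :
    hwMult L d k ≤ (w + 1) * hwMult L (d + d) (L * d) := by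
  have hk : (L * d : ℤ) - 2 * k = w := by
    zify at hw
    linarith
  have hzero : (L * (d + d : ℕ) : ℤ) - 2 * (L * d : ℕ) = 0 := by
    push_cast
    ring
  rw [hwMult, hwMult, hk, hzero]
  have h := finrank_le_of_anisotropic injective_weylTwist (weylForm L w)
    (loweringString L w ∘ₗ (highestWeightSpace ℝ L d w).subtype)
    (fun f hf => Subtype.ext ?_) (highestWeightSpace ℝ L (d + d) 0)
    fun f g => weylForm_loweringString_mem f.2 g.2
  · simpa only [Module.finrank_fin_fun] using h
  · simpa [loweringString] using eq_zero_of_weylForm_self_eq_zero hL hf 0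

end EvenWeight

end Pairing

section GaussianBinomial

open Polynomial

theorem rectPartitions_zero_left (k m : ℕ) : rectPartitions k 0 m = if k = 0 then 1 else 0 := by
  rw [rectPartitions_eq_ncard_boxMultisets]
  split_ifs with hk
  · refine Set.ncard_eq_one.mpr ⟨0, Set.ext fun t => ⟨fun ht => Multiset.card_eq_zero.mp ht.1, ?_⟩⟩
    rintro rfl
    simp [boxMultisets, hk]
  · refine (Set.ncard_eq_zero (finite_boxMultisets _ _ _)).mpr
      (Set.eq_empty_iff_forall_notMem.mpr ?_)
    rintro t ⟨hcard, hsum, -⟩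
    exact hk (by rw [← hsum, Multiset.card_eq_zero.mp hcard, Multiset.sum_zero])

theorem rectPartitions_zero_right (k l : ℕ) : rectPartitions k l 0 = if k = 0 then 1 else 0 := by
  rw [rectPartitions_eq_ncard_boxMultisets]
  split_ifs with hk
  · refine Set.ncard_eq_one.mpr ⟨Multiset.replicate l 0, Set.ext fun t => ⟨fun ht => ?_, ?_⟩⟩
    · exact Multiset.eq_replicate.mpr ⟨ht.1, fun i hi => Nat.le_zero.mp (ht.2.2 i hi)⟩
    · rintro rfl
      exact ⟨by simp, by simp [hk], fun i hi => (Multiset.eq_of_mem_replicate hi).le⟩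
  · refine (Set.ncard_eq_zero (finite_boxMultisets _ _ _)).mpr
      (Set.eq_empty_iff_forall_notMem.mpr ?_)
    rintro t ⟨-, hsum, hle⟩
    exact hk (by rw [← hsum, Multiset.sum_eq_zero fun i hi => Nat.le_zero.mp (hle i hi)])

theorem boxMultisets_succ_succ (l m k : ℕ) :
    boxMultisets (l + 1) (m + 1) k = boxMultisets (l + 1) m k ∪
      Multiset.cons (m + 1) '' {t ∈ boxMultisets l (m + 1) (k - (m + 1)) | m + 1 ≤ k} := by
  ext t
  constructor
  · rintro ⟨hcard, hsum, hle⟩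
    by_cases hm : m + 1 ∈ t
    · obtain ⟨s, rfl⟩ := Multiset.exists_cons_of_mem hm
      rw [Multiset.card_cons] at hcard
      rw [Multiset.sum_cons] at hsum
      exact Or.inr ⟨s, ⟨⟨by omega, by omega, fun i hi => hle i (Multiset.mem_cons_of_mem hi)⟩,
        by omega⟩, rfl⟩
    · exact Or.inl ⟨hcard, hsum, fun i hi =>
        Nat.le_of_lt_succ ((hle i hi).lt_of_ne fun h => hm (h ▸ hi))⟩
  · rintro (⟨hcard, hsum, hle⟩ | ⟨s, ⟨⟨hcard, hsum, hle⟩, hk⟩, rfl⟩)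
    · exact ⟨hcard, hsum, fun i hi => (hle i hi).trans m.le_succ⟩
    · refine ⟨by simp [hcard], ?_, by simpa using hle⟩
      rw [Multiset.sum_cons, hsum, Nat.add_sub_cancel' hk]

theorem rectPartitions_succ_succ (k l m : ℕ) : rectPartitions k (l + 1) (m + 1) =
    rectPartitions k (l + 1) m +
      if m + 1 ≤ k then rectPartitions (k - (m + 1)) l (m + 1) else 0 := by
  have hfin := (finite_boxMultisets l (m + 1) (k - (m + 1))).subset
    (Set.sep_subset _ fun _ => m + 1 ≤ k)
  have hdisj : Disjoint (boxMultisets (l + 1) m k)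
      (Multiset.cons (m + 1) '' {t ∈ boxMultisets l (m + 1) (k - (m + 1)) | m + 1 ≤ k}) := by
    rw [Set.disjoint_right]
    rintro _ ⟨t, -, rfl⟩ ht
    exact absurd (ht.2.2 (m + 1) (Multiset.mem_cons_self _ _)) (by omega)
  simp only [rectPartitions_eq_ncard_boxMultisets]
  rw [boxMultisets_succ_succ, Set.ncard_union_eq hdisj (finite_boxMultisets _ _ _)
    (hfin.image _), Set.ncard_image_of_injective _ fun _ _ h => (Multiset.cons_inj_right _).mp h]
  split_ifs with hk <;> simp [hk]

/-- The Gaussian binomial coefficient `binom(l + m, m)_q` as a polynomial in `q`. -/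
noncomputable def gaussBinom : ℕ → ℕ → ℕ[X]
  | 0, _ => 1
  | _ + 1, 0 => 1
  | l + 1, m + 1 => gaussBinom (l + 1) m + X ^ (m + 1) * gaussBinom l (m + 1)

theorem coeff_gaussBinom (l m k : ℕ) : (gaussBinom l m).coeff k = rectPartitions k l m := by
  induction l, m using gaussBinom.induct generalizing k with
  | case1 m => rw [gaussBinom, coeff_one, rectPartitions_zero_left]
  | case2 l => rw [gaussBinom, coeff_one, rectPartitions_zero_right]
  | case3 l m ihm ihl =>
    rw [gaussBinom, coeff_add, coeff_X_pow_mul', ihm, ihl, rectPartitions_succ_succ]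

theorem natDegree_gaussBinom_le (l m : ℕ) : (gaussBinom l m).natDegree ≤ l * m := by
  induction l, m using gaussBinom.induct with
  | case1 m => simp [gaussBinom]
  | case2 l => simp [gaussBinom]
  | case3 l m ihm ihl =>
    rw [gaussBinom]
    refine natDegree_add_le_of_degree_le (ihm.trans (by gcongr; omega)) ?_
    calc (X ^ (m + 1) * gaussBinom l (m + 1)).natDegree
      _ ≤ m + 1 + l * (m + 1) := natDegree_mul_le_of_le (natDegree_X_pow_le _) ihl
      _ = (l + 1) * (m + 1) := by ring

theorem eval_one_gaussBinom (l m : ℕ) : (gaussBinom l m).eval 1 = (l + m).choose l := by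
  induction l, m using gaussBinom.induct with
  | case1 m => simp [gaussBinom]
  | case2 l => simp [gaussBinom]
  | case3 l m ihm ihl =>
    rw [gaussBinom, eval_add, eval_mul, ihm, ihl, eval_pow, eval_X, one_pow, one_mul,
      show l + 1 + (m + 1) = (l + (m + 1)) + 1 by ring, Nat.choose_succ_succ', add_comm,
      show l + 1 + m = l + (m + 1) by ring]

theorem aeval_gaussBinom_mul_prod {R : Type*} [CommRing R] (q : R) (l m : ℕ) :
    aeval q (gaussBinom l m) *
        ((∏ i ∈ Finset.range l, (q ^ (i + 1) - 1)) * ∏ i ∈ Finset.range m, (q ^ (i + 1) - 1)) =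
      ∏ i ∈ Finset.range (l + m), (q ^ (i + 1) - 1) := by
  induction l, m using gaussBinom.induct with
  | case1 m => simp [gaussBinom]
  | case2 l => simp [gaussBinom]
  | case3 l m ihm ihl =>
    rw [show l + 1 + m = l + m + 1 by ring] at ihm
    rw [← add_assoc] at ihl
    rw [gaussBinom, map_add, map_mul, map_pow, aeval_X,
      show l + 1 + (m + 1) = l + m + 1 + 1 by ring, Finset.prod_range_succ _ (l + m + 1)]
    rw [Finset.prod_range_succ _ l] at ihm ⊢
    rw [Finset.prod_range_succ _ m] at ihl ⊢
    linear_combination (q ^ (m + 1) - 1) * ihm + q ^ (m + 1) * (q ^ (l + 1) - 1) * ihl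

theorem gaussBinom_comm (l m : ℕ) : gaussBinom l m = gaussBinom m l := by
  have hne : ∀ n : ℕ, ∏ i ∈ Finset.range n, ((X : ℤ[X]) ^ (i + 1) - 1) ≠ 0 := fun n =>
    Finset.prod_ne_zero_iff.mpr fun i _ => (monic_X_pow_sub_C 1 i.succ_ne_zero).ne_zero
  have h : aeval (X : ℤ[X]) (gaussBinom l m) = aeval (X : ℤ[X]) (gaussBinom m l) := by
    refine mul_right_cancel₀ (mul_ne_zero (hne l) (hne m)) ?_
    have hml := aeval_gaussBinom_mul_prod (X : ℤ[X]) m l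
    rw [mul_comm (∏ i ∈ Finset.range m, _), add_comm] at hml
    exact (aeval_gaussBinom_mul_prod X l m).trans hml.symm
  rw [aeval_X_left_eq_map, aeval_X_left_eq_map] at h
  exact map_injective _ Nat.cast_injective h

theorem rectPartitions_comm (k l m : ℕ) : rectPartitions k l m = rectPartitions k m l := by
  rw [← coeff_gaussBinom, gaussBinom_comm, coeff_gaussBinom]

theorem rectPartitions_zero (l m : ℕ) : rectPartitions 0 l m = 1 := by
  rw [← coeff_gaussBinom]
  induction l, m using gaussBinom.induct with
  | case1 m => simp [gaussBinom]
  | case2 l => simp [gaussBinom]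
  | case3 l m ihm _ => simp [gaussBinom, ihm]

theorem sum_rectPartitions (l m : ℕ) :
    ∑ k ∈ Finset.range (l * m + 1), rectPartitions k l m = (l + m).choose l := by
  rw [← eval_one_gaussBinom,
    eval_eq_sum_range' (Nat.lt_succ_of_le (natDegree_gaussBinom_le l m))]
  simp only [coeff_gaussBinom, one_pow, mul_one]

theorem rectPartitions_le_choose (k l m : ℕ) : rectPartitions k l m ≤ (l + m).choose l := by
  rcases le_or_gt k (l * m) with hk | hk
  · rw [← sum_rectPartitions]
    exact Finset.single_le_sum (f := fun k => rectPartitions k l m) (fun _ _ => Nat.zero_le _)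
      (Finset.mem_range_succ_iff.mpr hk)
  · rw [← coeff_gaussBinom, coeff_eq_zero_of_natDegree_lt
      ((natDegree_gaussBinom_le l m).trans_lt hk)]
    exact Nat.zero_le _

theorem hwMult_comm {L d k : ℕ} (hk : 2 * k ≤ L * d) : hwMult L d k = hwMult d L k := by
  rcases k with _ | k
  · rw [hwMult_zero, hwMult_zero, rectPartitions_comm]
  · have h := rectPartitions_add_hwMult_succ hk
    have h' := rectPartitions_add_hwMult_succ (mul_comm L d ▸ hk)
    rw [rectPartitions_comm k, rectPartitions_comm (k + 1)] at h'
    omega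

end GaussianBinomial

section StrictUnimodality

open Polynomial

theorem eval_div_pow_mod_eq_coeff {B : ℕ} {p : ℕ[X]} (hp : ∀ i, p.coeff i < B) (k : ℕ) :
    p.eval B / B ^ k % B = p.coeff k := by
  have hsplit : ∀ p : ℕ[X], p.eval B = p.coeff 0 + B * p.divX.eval B := fun p => by
    conv_lhs => rw [← divX_mul_X_add p]
    rw [eval_add, eval_mul, eval_X, eval_C, add_comm, mul_comm]
  induction k generalizing p with
  | zero =>
    rw [pow_zero, Nat.div_one, hsplit, Nat.add_mul_mod_self_left, Nat.mod_eq_of_lt (hp 0)]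
  | succ k ih =>
    have hB : 0 < B := (Nat.zero_le _).trans_lt (hp 0)
    rw [pow_succ', ← Nat.div_div_eq_div_mul, hsplit, Nat.add_mul_div_left _ _ hB,
      Nat.div_eq_of_lt (hp 0), zero_add,
      ih fun i => coeff_divX (p := p) ▸ hp (i + 1), coeff_divX]

theorem eval_gaussBinom {B : ℕ} (hB : 1 < B) (l m : ℕ) :
    (gaussBinom l m).eval B = (∏ i ∈ Finset.range (l + m), (B ^ (i + 1) - 1)) /
      ((∏ i ∈ Finset.range l, (B ^ (i + 1) - 1)) * ∏ i ∈ Finset.range m, (B ^ (i + 1) - 1)) := by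
  have hpos : ∀ n, 0 < ∏ i ∈ Finset.range n, (B ^ (i + 1) - 1) := fun n =>
    Finset.prod_pos fun i _ => Nat.sub_pos_of_lt (Nat.one_lt_pow i.succ_ne_zero hB)
  have hcast : ∀ n, ((∏ i ∈ Finset.range n, (B ^ (i + 1) - 1) : ℕ) : ℤ) =
      ∏ i ∈ Finset.range n, ((B : ℤ) ^ (i + 1) - 1) := fun n => by
    push_cast [Nat.cast_sub (Nat.one_le_pow _ _ (zero_lt_one.trans hB))]
    rfl
  refine (Nat.div_eq_of_eq_mul_left (Nat.mul_pos (hpos l) (hpos m)) ?_).symm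
  have h := aeval_gaussBinom_mul_prod (algebraMap ℕ ℤ B) l m
  rw [aeval_algebraMap_apply_eq_algebraMap_eval, eq_natCast, eq_natCast, ← hcast, ← hcast,
    ← hcast] at h
  exact_mod_cast h.symm

/-- The number `binom(l + m, m)_q` at `q = 2 ^ 32`. Its digits in base `2 ^ 32` are the coefficients
of the polynomial, as long as these are smaller than `2 ^ 32`. -/
def gaussValue (l m : ℕ) : ℕ :=
  (∏ i ∈ Finset.range (l + m), ((2 ^ 32) ^ (i + 1) - 1)) /
    ((∏ i ∈ Finset.range l, ((2 ^ 32) ^ (i + 1) - 1)) *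
      ∏ i ∈ Finset.range m, ((2 ^ 32) ^ (i + 1) - 1))

theorem gaussValue_div_mod {l m : ℕ} (h : l + m < 32) (k : ℕ) :
    gaussValue l m / (2 ^ 32) ^ k % 2 ^ 32 = rectPartitions k l m := by
  rw [gaussValue, ← eval_gaussBinom (by norm_num), eval_div_pow_mod_eq_coeff, coeff_gaussBinom]
  intro i
  calc (gaussBinom l m).coeff i
    _ = rectPartitions i l m := coeff_gaussBinom l m i
    _ ≤ (l + m).choose l := rectPartitions_le_choose i l m
    _ ≤ 2 ^ (l + m) := Nat.choose_le_two_pow _ _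
    _ < 2 ^ 32 := Nat.pow_lt_pow_right one_lt_two h

theorem hwMult_pos_of_lt_sixteen {L d k : ℕ} (hL : 8 ≤ L) (hL' : L < 16) (hd : 8 ≤ d)
    (hd' : d < 16) (hk : 2 ≤ k) (hkLd : 2 * k ≤ L * d) : 0 < hwMult L d k := by
  have hdigits : ∀ i < 8, ∀ j < 8, ∀ n < (i + 8) * (j + 8) / 2 - 1,
      gaussValue (i + 8) (j + 8) / (2 ^ 32) ^ (n + 1) % 2 ^ 32 <
        gaussValue (i + 8) (j + 8) / (2 ^ 32) ^ (n + 2) % 2 ^ 32 := by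
    decide +kernel
  obtain ⟨n, rfl⟩ := Nat.exists_eq_add_of_le' hk
  have hlt := hdigits (d - 8) (by omega) (L - 8) (by omega) n
  rw [Nat.sub_add_cancel hL, Nat.sub_add_cancel hd, gaussValue_div_mod (by omega),
    gaussValue_div_mod (by omega), mul_comm d] at hlt
  have hadd : rectPartitions (n + 1) d L + hwMult L d (n + 2) = rectPartitions (n + 2) d L :=
    rectPartitions_add_hwMult_succ hkLd
  have := hlt (by omega)
  omega

theorem hwMult_zero_eq_one (L d : ℕ) : hwMult L d 0 = 1 := by
  rw [hwMult_zero, rectPartitions_zero]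

theorem hwMult_pos_of_pos_sub_eight {L d : ℕ} (hL : 8 ≤ L) (hd : 16 ≤ d)
    (h₈ : ∀ k, 2 ≤ k → 2 * k ≤ L * 8 → 0 < hwMult L 8 k)
    (hsub : ∀ k, 2 ≤ k → 2 * k ≤ L * (d - 8) → 0 < hwMult L (d - 8) k)
    {k : ℕ} (hk : 2 ≤ k) (hkLd : 2 * k ≤ L * d) : 0 < hwMult L d k := by
  have hadd : ∀ k₁ k₂, k₁ + k₂ = k → 0 < hwMult L (d - 8) k₁ → 0 < hwMult L 8 k₂ →
      0 < hwMult L d k := by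
    rintro k₁ k₂ rfl h₁ h₂
    have := hwMult_le_hwMult_add (d₁ := d - 8) (k₁ := k₁) h₂
    rw [Nat.sub_add_cancel (by omega)] at this
    exact h₁.trans_le this
  have hsplit : L * d = L * (d - 8) + L * 8 := by rw [← mul_add, Nat.sub_add_cancel (by omega)]
  have hle : L * 8 ≤ L * (d - 8) := Nat.mul_le_mul_left _ (by omega)
  rcases lt_trichotomy k (4 * L + 1) with h | h | h
  · exact hadd 0 k (zero_add k) (by rw [hwMult_zero_eq_one]; exact one_pos)
      (h₈ k hk (by omega))
  · exact hadd 2 (4 * L - 1) (by omega) (hsub 2 le_rfl (by omega))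
      (h₈ _ (by omega) (by omega))
  · exact hadd (k - 4 * L) (4 * L) (by omega) (hsub _ (by omega) (by omega))
      (h₈ _ (by omega) (by omega))

theorem hwMult_pos_of_forall_lt_sixteen {L : ℕ} (hL : 8 ≤ L)
    (hbase : ∀ d k, 8 ≤ d → d < 16 → 2 ≤ k → 2 * k ≤ L * d → 0 < hwMult L d k)
    {d k : ℕ} (hd : 8 ≤ d) (hk : 2 ≤ k) (hkLd : 2 * k ≤ L * d) : 0 < hwMult L d k := by
  induction d using Nat.strong_induction_on generalizing k with
  | _ d ih =>
    rcases lt_or_ge d 16 with h | h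
    · exact hbase d k hd h hk hkLd
    · exact hwMult_pos_of_pos_sub_eight hL h (fun j => hbase 8 j le_rfl (by norm_num))
        (fun j => ih (d - 8) (by omega) (by omega)) hk hkLd

theorem hwMult_pos {L d k : ℕ} (hL : 8 ≤ L) (hd : 8 ≤ d) (hk : k ≠ 1) (hkLd : 2 * k ≤ L * d) :
    0 < hwMult L d k := by
  obtain rfl | hk : k = 0 ∨ 2 ≤ k := by omega
  · rw [hwMult_zero_eq_one]
    exact one_pos
  refine hwMult_pos_of_forall_lt_sixteen hL (fun d k hd hd' hk hkLd => ?_) hd hk hkLd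
  rw [hwMult_comm hkLd]
  exact hwMult_pos_of_forall_lt_sixteen hd
    (fun L k hL hL' hk hk' => hwMult_pos_of_lt_sixteen hd hd' hL hL' hk hk') hL hk
    (mul_comm L d ▸ hkLd)

end StrictUnimodality

section CentralMultiplicity

theorem hwMult_le_mul_hwMult_center (t k : ℕ) :
    hwMult (2 * t) t k ≤ (2 * t ^ 2 + 1) * hwMult (2 * t) (2 * t) (2 * t ^ 2) := by
  rcases lt_or_ge (2 * t * t) (2 * k) with hk | hk
  · rw [hwMult_eq_zero hk]
    exact Nat.zero_le _
  · calc hwMult (2 * t) t k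
      _ ≤ (2 * t * t - 2 * k + 1) * hwMult (2 * t) (t + t) (2 * t * t) :=
        hwMult_le_mul_hwMult_add_self (even_two_mul t) (Nat.add_sub_cancel' hk)
      _ ≤ (2 * t * t + 1) * hwMult (2 * t) (t + t) (2 * t * t) := by gcongr; exact Nat.sub_le _ _
      _ = (2 * t ^ 2 + 1) * hwMult (2 * t) (2 * t) (2 * t ^ 2) := by
        rw [← two_mul, mul_assoc, ← sq]

theorem choose_le_mul_hwMult_center (t : ℕ) : (3 * t).choose t ≤
    (2 * t ^ 2 + 1) ^ 2 * (t ^ 2 + 1) * hwMult (2 * t) (2 * t) (2 * t ^ 2) := by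
  set M := hwMult (2 * t) (2 * t) (2 * t ^ 2)
  have hrect : ∀ k, rectPartitions k t (2 * t) ≤ (t ^ 2 + 1) * ((2 * t ^ 2 + 1) * M) := fun k =>
    calc rectPartitions k t (2 * t)
      _ ≤ ∑ j ∈ Finset.range (2 * t * t / 2 + 1), hwMult (2 * t) t j :=
        rectPartitions_le_sum_hwMult _ _ _
      _ ≤ (Finset.range (2 * t * t / 2 + 1)).card • ((2 * t ^ 2 + 1) * M) :=
        Finset.sum_le_card_nsmul _ _ _ fun j _ => hwMult_le_mul_hwMult_center t j
      _ = (t ^ 2 + 1) * ((2 * t ^ 2 + 1) * M) := by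
        rw [Finset.card_range, smul_eq_mul, mul_assoc, ← sq, Nat.mul_div_cancel_left _ two_pos]
  calc (3 * t).choose t
    _ = ∑ k ∈ Finset.range (t * (2 * t) + 1), rectPartitions k t (2 * t) := by
      rw [sum_rectPartitions, show t + 2 * t = 3 * t by ring]
    _ ≤ (Finset.range (t * (2 * t) + 1)).card • ((t ^ 2 + 1) * ((2 * t ^ 2 + 1) * M)) :=
      Finset.sum_le_card_nsmul _ _ _ fun k _ => hrect k
    _ = (2 * t ^ 2 + 1) ^ 2 * (t ^ 2 + 1) * M := by
      rw [Finset.card_range, smul_eq_mul]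
      ring

theorem choose_three_mul_succ (t : ℕ) :
    (3 * (t + 1)).choose (t + 1) * ((2 * t + 2) * (2 * t + 1)) =
      (3 * t).choose t * (3 * (3 * t + 2) * (3 * t + 1)) := by
  have h₁ := Nat.add_one_mul_choose_eq (3 * t + 2) t
  have h₂ := Nat.choose_mul_succ_eq (3 * t + 1) t
  have h₃ := Nat.choose_mul_succ_eq (3 * t) t
  rw [show 3 * t + 1 + 1 - t = 2 * t + 2 by omega] at h₂
  rw [show 3 * t + 1 - t = 2 * t + 1 by omega] at h₃
  refine Nat.eq_of_mul_eq_mul_right t.succ_pos ?_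
  calc (3 * (t + 1)).choose (t + 1) * ((2 * t + 2) * (2 * t + 1)) * (t + 1)
    _ = (3 * t + 3).choose (t + 1) * (t + 1) * ((2 * t + 2) * (2 * t + 1)) := by ring_nf
    _ = (3 * t + 3) * ((3 * t + 2).choose t * (2 * t + 2)) * (2 * t + 1) := by rw [← h₁]; ring
    _ = (3 * t + 3) * ((3 * t + 1).choose t * (2 * t + 1)) * (3 * t + 2) := by rw [← h₂]; ring
    _ = (3 * t).choose t * (3 * (3 * t + 2) * (3 * t + 1)) * (t + 1) := by rw [← h₃]; ring

theorem three_pow_mul_le_choose {t : ℕ} (ht : 11 ≤ t) :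
    3 ^ (t + 1) * ((2 * t ^ 2 + 1) ^ 2 * (t ^ 2 + 1)) ≤ 2 ^ 18 * (3 * t).choose t := by
  induction t, ht using Nat.le_induction with
  | base => decide +kernel
  | succ t ht ih =>
    have hratio : 3 * ((2 * (t + 1) ^ 2 + 1) ^ 2 * ((t + 1) ^ 2 + 1)) *
          ((2 * t + 2) * (2 * t + 1)) ≤
        (2 * t ^ 2 + 1) ^ 2 * (t ^ 2 + 1) * (3 * (3 * t + 2) * (3 * t + 1)) := by
      obtain ⟨u, rfl⟩ := Nat.exists_eq_add_of_le' ht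
      ring_nf
      gcongr <;> norm_num
    refine Nat.le_of_mul_le_mul_right ?_ (show 0 < (2 * t + 2) * (2 * t + 1) by positivity)
    calc 3 ^ (t + 1 + 1) * ((2 * (t + 1) ^ 2 + 1) ^ 2 * ((t + 1) ^ 2 + 1)) *
          ((2 * t + 2) * (2 * t + 1))
      _ = 3 ^ (t + 1) * (3 * ((2 * (t + 1) ^ 2 + 1) ^ 2 * ((t + 1) ^ 2 + 1)) *
          ((2 * t + 2) * (2 * t + 1))) := by ring
      _ ≤ 3 ^ (t + 1) * ((2 * t ^ 2 + 1) ^ 2 * (t ^ 2 + 1) *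
          (3 * (3 * t + 2) * (3 * t + 1))) := Nat.mul_le_mul_left _ hratio
      _ = 3 ^ (t + 1) * ((2 * t ^ 2 + 1) ^ 2 * (t ^ 2 + 1)) *
          (3 * (3 * t + 2) * (3 * t + 1)) := by ring
      _ ≤ 2 ^ 18 * (3 * t).choose t * (3 * (3 * t + 2) * (3 * t + 1)) :=
        Nat.mul_le_mul_right _ ih
      _ = 2 ^ 18 * (3 * (t + 1)).choose (t + 1) * ((2 * t + 2) * (2 * t + 1)) := by
        rw [mul_assoc, ← choose_three_mul_succ, mul_assoc]

theorem three_pow_le_hwMult_center {t : ℕ} (ht : 11 ≤ t) :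
    3 ^ (t + 1) ≤ 2 ^ 18 * hwMult (2 * t) (2 * t) (2 * t ^ 2) := by
  refine Nat.le_of_mul_le_mul_right ?_
    (show 0 < (2 * t ^ 2 + 1) ^ 2 * (t ^ 2 + 1) by positivity)
  calc 3 ^ (t + 1) * ((2 * t ^ 2 + 1) ^ 2 * (t ^ 2 + 1))
    _ ≤ 2 ^ 18 * (3 * t).choose t := three_pow_mul_le_choose ht
    _ ≤ 2 ^ 18 * ((2 * t ^ 2 + 1) ^ 2 * (t ^ 2 + 1) * hwMult (2 * t) (2 * t) (2 * t ^ 2)) :=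
      Nat.mul_le_mul_left _ (choose_le_mul_hwMult_center t)
    _ = 2 ^ 18 * hwMult (2 * t) (2 * t) (2 * t ^ 2) *
        ((2 * t ^ 2 + 1) ^ 2 * (t ^ 2 + 1)) := by ring

theorem hwMult_center_le_hwMult_add {a b t i j : ℕ} (ha : 8 ≤ a) (hb : 8 ≤ b) (ht : 4 ≤ t)
    (hi : i ≠ 1) (hia : i ≤ t * a) (hj : j ≠ 1) (hjb : 2 * j ≤ (2 * t + a) * b) :
    hwMult (2 * t) (2 * t) (2 * t ^ 2) ≤
      hwMult (2 * t + a) (2 * t + b) (2 * t ^ 2 + i + j) :=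
  calc hwMult (2 * t) (2 * t) (2 * t ^ 2)
    _ ≤ hwMult (2 * t) (2 * t + a) (2 * t ^ 2 + i) :=
      hwMult_le_hwMult_add (hwMult_pos (by omega) ha hi (by rw [mul_assoc]; gcongr))
    _ = hwMult (2 * t + a) (2 * t) (2 * t ^ 2 + i) := hwMult_comm (by linarith)
    _ ≤ hwMult (2 * t + a) (2 * t + b) (2 * t ^ 2 + i + j) :=
      hwMult_le_hwMult_add (hwMult_pos (by omega) hb hj hjb)

theorem hwMult_center_le_hwMult {a b t k : ℕ} (ha : 8 ≤ a) (hb : 8 ≤ b) (ht : 4 ≤ t)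
    (hk : 2 * t ^ 2 + 2 ≤ k) (hk' : 2 * k ≤ (2 * t + a) * (2 * t + b)) :
    hwMult (2 * t) (2 * t) (2 * t ^ 2) ≤ hwMult (2 * t + a) (2 * t + b) k := by
  have hprod : (2 * t + a) * (2 * t + b) = 4 * t ^ 2 + 2 * (t * a) + (2 * t + a) * b := by ring
  have hta : 32 ≤ t * a := Nat.mul_le_mul ht ha
  have htb : 64 ≤ (2 * t + a) * b := Nat.mul_le_mul (show 8 ≤ 2 * t + a by omega) hb
  obtain ⟨i, j, hi, hia, hj, hjb, rfl⟩ : ∃ i j, i ≠ 1 ∧ i ≤ t * a ∧ j ≠ 1 ∧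
      2 * j ≤ (2 * t + a) * b ∧ 2 * t ^ 2 + i + j = k := by
    rcases lt_trichotomy k (2 * t ^ 2 + t * a + 1) with h | h | h
    · exact ⟨k - 2 * t ^ 2, 0, by omega, by omega, by omega, by omega, by omega⟩
    · exact ⟨t * a - 1, 2, by omega, by omega, by omega, by omega, by omega⟩
    · exact ⟨t * a, k - 2 * t ^ 2 - t * a, by omega, by omega, by omega, by omega, by omega⟩
  exact hwMult_center_le_hwMult_add ha hb ht hi hia hj hjb

end CentralMultiplicity

section RealEstimates

theorem two_rpow_sqrt_le_rpow_of_mem_Icc {a b : ℕ} {v : ℝ} (hav : a ≤ v) (hvb : v ≤ b ^ 2)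
    (hab : 2 ^ (4 * b) ≤ a ^ 9) : (2 : ℝ) ^ √v ≤ v ^ (9 / 4 : ℝ) :=
  calc (2 : ℝ) ^ √v
    _ ≤ 2 ^ (b : ℝ) :=
      Real.rpow_le_rpow_of_exponent_le one_le_two (Real.sqrt_le_left b.cast_nonneg |>.mpr hvb)
    _ = ((2 : ℝ) ^ (4 * b)) ^ (1 / 4 : ℝ) := by
      rw [← Real.rpow_natCast, ← Real.rpow_mul zero_le_two]
      push_cast
      ring_nf
    _ ≤ ((a : ℝ) ^ 9) ^ (1 / 4 : ℝ) := by gcongr; exact_mod_cast hab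
    _ = (a : ℝ) ^ (9 / 4 : ℝ) := by
      rw [← Real.rpow_natCast, ← Real.rpow_mul a.cast_nonneg]
      norm_num
    _ ≤ v ^ (9 / 4 : ℝ) := by gcongr

theorem two_rpow_sqrt_le_rpow {v : ℝ} (h₂ : 2 ≤ v) (h₂₅₆ : v ≤ 256) :
    (2 : ℝ) ^ √v ≤ v ^ (9 / 4 : ℝ) := by
  have piece : ∀ a b : ℕ, (a : ℝ) ≤ v → v ≤ (b : ℝ) ^ 2 → 2 ^ (4 * b) ≤ a ^ 9 →
    (2 : ℝ) ^ √v ≤ v ^ (9 / 4 : ℝ) := fun _ _ => two_rpow_sqrt_le_rpow_of_mem_Icc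
  rcases le_total v 4 with h₄ | h₄
  · exact piece 2 2 (by norm_num; linarith) (by norm_num; linarith) (by norm_num)
  rcases le_total v 16 with h₁₆ | h₁₆
  · exact piece 4 4 (by norm_num; linarith) (by norm_num; linarith) (by norm_num)
  rcases le_total v 64 with h₆₄ | h₆₄
  · exact piece 16 8 (by norm_num; linarith) (by norm_num; linarith) (by norm_num)
  rcases le_total v 169 with h₁₆₉ | h₁₆₉
  · exact piece 64 13 (by norm_num; linarith) (by norm_num; linarith) (by norm_num)
  · exact piece 169 16 (by norm_num; linarith) (by norm_num; linarith) (by norm_num)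

theorem two_rpow_sqrt_le_three_pow {v : ℝ} {n : ℕ} (hv : v ≤ (3 / 2 * n) ^ 2) :
    (2 : ℝ) ^ √v ≤ 3 ^ n := by
  have hthree : (2 : ℝ) ^ (3 / 2 : ℝ) ≤ 3 := by
    refine (pow_le_pow_iff_left₀ (by positivity) (by norm_num) two_ne_zero).mp ?_
    rw [← Real.rpow_mul_natCast zero_le_two]
    norm_num
  calc (2 : ℝ) ^ √v
    _ ≤ 2 ^ (3 / 2 * n : ℝ) :=
      Real.rpow_le_rpow_of_exponent_le one_le_two ((Real.sqrt_le_left (by positivity)).mpr hv)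
    _ = ((2 : ℝ) ^ (3 / 2 : ℝ)) ^ n := Real.rpow_mul_natCast zero_le_two _ _
    _ ≤ 3 ^ n := by gcongr

theorem two_pow_eighteen_le_rpow {v : ℝ} (hv : 256 ≤ v) : (2 : ℝ) ^ 18 ≤ v ^ (9 / 4 : ℝ) :=
  calc (2 : ℝ) ^ 18
    _ = 256 ^ (9 / 4 : ℝ) := by
      rw [show (256 : ℝ) = 2 ^ (8 : ℝ) by norm_num, ← Real.rpow_mul zero_le_two]
      norm_num
    _ ≤ v ^ (9 / 4 : ℝ) := by gcongr

theorem three_mul_sqrt_three_div_le_one : 3 * √3 / (√2 * Real.pi ^ 2) ≤ 1 := by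
  have h₃ : √3 ≤ 2 := Real.sqrt_le_iff.mpr ⟨by norm_num, by norm_num⟩
  have h₂ : 1 ≤ √2 := Real.one_le_sqrt.mpr one_le_two
  refine div_le_one_of_le₀ ?_ (by positivity)
  calc 3 * √3
    _ ≤ 1 * 3 ^ 2 := by linarith
    _ ≤ √2 * Real.pi ^ 2 := by gcongr; exact Real.pi_gt_three.le

end RealEstimates

section LowerBound

theorem exists_center {k T : ℕ} {v : ℝ} (hv : 256 < v) (hvk : v ≤ k) (hvT : v ≤ 2 * T ^ 2) :
    ∃ t, 11 ≤ t ∧ t ≤ T ∧ 2 * t ^ 2 + 2 ≤ k ∧ v ≤ 2 * ((t + 1 : ℕ) : ℝ) ^ 2 + 1 := by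
  have hk : 256 < k := by exact_mod_cast hv.trans_le hvk
  have hT : 11 ≤ T := by
    have : 128 < T ^ 2 := by exact_mod_cast (by linarith : (128 : ℝ) < T ^ 2)
    by_contra! hlt
    have : T ^ 2 ≤ 10 ^ 2 := Nat.pow_le_pow_left (by omega) 2
    omega
  set s := Nat.sqrt ((k - 2) / 2)
  have hs : 11 ≤ s := Nat.le_sqrt'.mpr (by omega)
  refine ⟨min T s, le_min hT hs, min_le_left _ _, ?_, ?_⟩
  · have := Nat.le_sqrt'.mp (min_le_right T s)
    omega
  · rcases le_total T s with h | h
    · rw [min_eq_left h]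
      push_cast
      linarith [sq_nonneg (T : ℝ), T.cast_nonneg (α := ℝ)]
    · rw [min_eq_right h]
      have hlt : (k - 2) / 2 < (s + 1) ^ 2 := Nat.lt_succ_sqrt' _
      exact hvk.trans (by exact_mod_cast (by omega : k ≤ 2 * (s + 1) ^ 2 + 1))

theorem two_rpow_sqrt_div_rpow_le_hwMult {ℓ m k : ℕ} {v : ℝ} (hk : 2 * k ≤ ℓ * m) (hv : 256 < v)
    (hvk : v ≤ k) (hvT : v ≤ 2 * (((min ℓ m - 8) / 2 : ℕ) : ℝ) ^ 2) :
    (2 : ℝ) ^ √v / v ^ (9 / 4 : ℝ) ≤ hwMult ℓ m k := by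
  obtain ⟨t, ht, htT, htk, hvt⟩ := exists_center hv hvk hvT
  obtain ⟨a, rfl⟩ := Nat.exists_eq_add_of_le (show 2 * t + 8 ≤ ℓ by omega)
  obtain ⟨b, rfl⟩ := Nat.exists_eq_add_of_le (show 2 * t + 8 ≤ m by omega)
  rw [add_assoc, add_assoc] at hk ⊢
  have hthree : 3 ^ (t + 1) ≤ 2 ^ 18 * hwMult (2 * t + (8 + a)) (2 * t + (8 + b)) k :=
    (three_pow_le_hwMult_center ht).trans (Nat.mul_le_mul_left _
      (hwMult_center_le_hwMult (by omega) (by omega) (by omega) htk hk))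
  have : (12 : ℝ) ≤ (t + 1 : ℕ) := by exact_mod_cast Nat.succ_le_succ ht
  calc (2 : ℝ) ^ √v / v ^ (9 / 4 : ℝ)
    _ ≤ 3 ^ (t + 1) / 2 ^ 18 := by
      gcongr
      · exact two_rpow_sqrt_le_three_pow (hvt.trans (by nlinarith))
      · exact two_pow_eighteen_le_rpow hv.le
    _ ≤ hwMult (2 * t + (8 + a)) (2 * t + (8 + b)) k := by
      rw [div_le_iff₀' (by positivity)]
      exact_mod_cast hthree

theorem rectPartitions_sub_eq_hwMult {ℓ m k : ℕ} (hk₀ : k ≠ 0) (hk : 2 * k ≤ ℓ * m) :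
    (rectPartitions k ℓ m : ℝ) - rectPartitions (k - 1) ℓ m = hwMult ℓ m k := by
  obtain ⟨k, rfl⟩ := Nat.exists_eq_add_one_of_ne_zero hk₀
  rw [rectPartitions_comm _ ℓ, rectPartitions_comm _ ℓ, sub_eq_iff_eq_add', Nat.add_sub_cancel]
  exact_mod_cast (rectPartitions_add_hwMult_succ hk).symm

theorem rect_qbinomial_lower_bound_general (ℓ m k : ℕ) (v : ℝ) (hk : 2 * k ≤ ℓ * m)
    (hv₂ : 2 ≤ v) (hvk : v ≤ k) (hvT : v ≤ 2 * (((min ℓ m - 8) / 2 : ℕ) : ℝ) ^ 2) :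
    (2 : ℝ) ^ √v / v ^ (9 / 4 : ℝ) ≤
      (rectPartitions k ℓ m : ℝ) - rectPartitions (k - 1) ℓ m := by
  have hk₂ : 2 ≤ k := by exact_mod_cast hv₂.trans hvk
  rw [rectPartitions_sub_eq_hwMult (by omega) hk]
  rcases le_or_gt v 256 with h | h
  · have hT : (min ℓ m - 8) / 2 ≠ 0 := by
      intro h₀
      rw [h₀, Nat.cast_zero] at hvT
      linarith
    have hpos : 0 < hwMult ℓ m k := hwMult_pos (by omega) (by omega) (by omega) hk
    calc (2 : ℝ) ^ √v / v ^ (9 / 4 : ℝ)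
      _ ≤ 1 := div_le_one_of_le₀ (two_rpow_sqrt_le_rpow hv₂ h) (by positivity)
      _ ≤ hwMult ℓ m k := by exact_mod_cast hpos
  · exact two_rpow_sqrt_div_rpow_le_hwMult hk h hvk hvT

theorem two_le_sq_div_two_and_le {ℓ m n : ℕ} (hl : 18 ≤ ℓ) (hlm : ℓ ≤ m)
    (hn : n = if Even (ℓ * m) then 2 * ((ℓ - 8) / 2) else 2 * ((ℓ - 8) / 2) - 1) :
    (2 : ℝ) ≤ (n : ℝ) ^ 2 / 2 ∧ (n : ℝ) ^ 2 / 2 ≤ 2 * (((min ℓ m - 8) / 2 : ℕ) : ℝ) ^ 2 := by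
  rw [min_eq_left hlm]
  have hn₂ : (2 : ℝ) ≤ n := by exact_mod_cast (by split_ifs at hn <;> omega : 2 ≤ n)
  have hnT : (n : ℝ) ≤ 2 * ((ℓ - 8) / 2 : ℕ) := by
    exact_mod_cast (by split_ifs at hn <;> omega : n ≤ 2 * ((ℓ - 8) / 2))
  constructor <;> nlinarith

end LowerBound

/-- For `18 ≤ ℓ ≤ m` and `2 ≤ k ≤ ℓm/2`, with `n = 2⌊(ℓ−8)/2⌋` if `ℓm` is even and
`n = 2⌊(ℓ−8)/2⌋ − 1` if `ℓm` is odd, and `v = min(k, n²/2)` as a real number, one has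
`p_k(ℓ,m) − p_{k−1}(ℓ,m) ≥ C · 2^{√v} / v^{9/4}` where `C = 3√3/(√2·π²)`. -/
theorem rect_qbinomial_lower_bound (ℓ m k n : ℕ) (v : ℝ)
    (hl : 18 ≤ ℓ) (hlm : ℓ ≤ m) (hk1 : 2 ≤ k) (hk2 : 2 * k ≤ ℓ * m)
    (hn : n = if Even (ℓ * m) then 2 * ((ℓ - 8) / 2) else 2 * ((ℓ - 8) / 2) - 1)
    (hv : v = min (k : ℝ) ((n : ℝ) ^ 2 / 2)) :
    ((rectPartitions k ℓ m : ℝ) - (rectPartitions (k - 1) ℓ m : ℝ)) ≥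
      (3 * Real.sqrt 3 / (Real.sqrt 2 * Real.pi ^ 2)) *
        (2 : ℝ) ^ Real.sqrt v / v ^ ((9 : ℝ) / 4) := by
  obtain ⟨hn₂, hnT⟩ := two_le_sq_div_two_and_le hl hlm hn
  have hv₂ : 2 ≤ v := hv ▸ le_min (by exact_mod_cast hk1) hn₂
  rw [ge_iff_le, mul_div_assoc]
  exact (mul_le_of_le_one_left (by positivity) three_mul_sqrt_three_div_le_one).trans
    (rect_qbinomial_lower_bound_general ℓ m k v hk2 hv₂ (hv.trans_le (min_le_left _ _))
      ((hv.trans_le (min_le_right _ _)).trans hnT))
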